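/- arXiv:math/0401250 — 2 statements merged into one kernel-verified Lean document; each statement's English description precedes it below -/
import Mathlib

section
/- Let n ≥ 1, s > 0 and 0 ≤ ν < s. Let g : ℝ^n → ℝ^n be continuous on the closed ball B̄(0,s) and satisfy ‖g(x) − x‖ ≤ ν for every x ∈ B̄(0,s). Then the open ball B(0, s − ν) is contained in the image g(B̄(0,s)). -/
open Metric

/-!
For a compactly supported `C¹` map `h` and a compact set `s` containing its support, consider
`∫ x in s, φ (x + t • h x) * det (1 + t • Dh x)`. When `t` is small, `x ↦ x + t • h x` is an
injective map of `s` onto itself and the change of variables formula gives `∫ x in s, φ x`. When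
`φ` is polynomial on lines, the integral is a polynomial in `t`, so it keeps this value at `t = 1`,
and by Stone–Weierstrass the same then holds for every continuous `φ`. Taking for `φ` a bump
supported away from the range shows that `x ↦ x + h x` has dense range. Smooth approximation,
properness and a cutoff extend this to surjectivity of `x ↦ x + u x` for all bounded continuous `u`.
Finally, if `u` is a norm-preserving Tietze extension of `g - id` from `closedBall y ν`, then any
solution of `x + u x = y` lies in that ball, so that `g x = y`.
-/

open Filter MeasureTheory Polynomial Set Topology
open scoped BoundedContinuousFunction NNReal

section Polynomial

/-- `f` is a real polynomial function of degree at most `N`. The bound is explicit so that one set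
of `N + 1` interpolation nodes serves a whole family of such functions. -/
def IsPolynomialOfDegreeLE (N : ℕ) (f : ℝ → ℝ) : Prop :=
  ∃ p : ℝ[X], p.natDegree ≤ N ∧ ∀ t, p.eval t = f t

namespace IsPolynomialOfDegreeLE

variable {M N : ℕ} {f g : ℝ → ℝ}

theorem const (N : ℕ) (c : ℝ) : IsPolynomialOfDegreeLE N fun _ ↦ c :=
  ⟨C c, by simp, by simp⟩

theorem add (hf : IsPolynomialOfDegreeLE M f) (hg : IsPolynomialOfDegreeLE N g) :
    IsPolynomialOfDegreeLE (max M N) fun t ↦ f t + g t := by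
  obtain ⟨p, hp, hpf⟩ := hf
  obtain ⟨q, hq, hqg⟩ := hg
  exact ⟨p + q, (natDegree_add_le p q).trans (max_le_max hp hq), fun t ↦ by simp [hpf, hqg]⟩

theorem mul (hf : IsPolynomialOfDegreeLE M f) (hg : IsPolynomialOfDegreeLE N g) :
    IsPolynomialOfDegreeLE (M + N) fun t ↦ f t * g t := by
  obtain ⟨p, hp, hpf⟩ := hf
  obtain ⟨q, hq, hqg⟩ := hg
  exact ⟨p * q, natDegree_mul_le_of_le hp hq, fun t ↦ by simp [hpf, hqg]⟩

end IsPolynomialOfDegreeLE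

theorem eval_eq_sum_eval_lagrangeBasis_mul_eval {F : Type*} [Field F] [DecidableEq F] {p : F[X]}
    {T : Finset F} (hp : p.natDegree < T.card) (t : F) :
    p.eval t = ∑ i ∈ T, (Lagrange.basis T id i).eval t * p.eval i := by
  have hdeg : p.degree < T.card := degree_le_natDegree.trans_lt (by exact_mod_cast hp)
  conv_lhs => rw [Lagrange.eq_interpolate Function.injective_id.injOn hdeg]
  simp [Lagrange.interpolate_apply, eval_finsetSum, mul_comm]

theorem integral_eq_of_isPolynomialOfDegreeLE {X : Type*} [MeasurableSpace X] {μ : Measure X}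
    {N : ℕ} {F : ℝ → X → ℝ} (hF : ∀ x, IsPolynomialOfDegreeLE N fun t ↦ F t x) {T : Set ℝ}
    (hT : T.Infinite) (hint : ∀ t ∈ T, Integrable (F t) μ) {c : ℝ}
    (hc : ∀ t ∈ T, ∫ x, F t x ∂μ = c) (t : ℝ) : ∫ x, F t x ∂μ = c := by
  obtain ⟨S, hST, hcard⟩ := hT.exists_subset_card_eq (N + 1)
  set w : ℝ → ℝ := fun i ↦ (Lagrange.basis S id i).eval t
  have hw : ∑ i ∈ S, w i = 1 := by
    simpa using (eval_eq_sum_eval_lagrangeBasis_mul_eval (p := 1) (T := S) (by simp [hcard]) t).symm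
  have hFt (x : X) : F t x = ∑ i ∈ S, w i * F i x := by
    obtain ⟨p, hp, hpF⟩ := hF x
    simpa only [hpF] using
      eval_eq_sum_eval_lagrangeBasis_mul_eval (p := p) (T := S) (by lia) t
  calc ∫ x, F t x ∂μ = ∑ i ∈ S, w i * ∫ x, F i x ∂μ := by
        simp_rw [hFt]
        rw [integral_finsetSum _ fun i hi ↦ (hint i (hST hi)).const_mul _]
        simp_rw [integral_const_mul]
    _ = ∑ i ∈ S, w i * c := Finset.sum_congr rfl fun i hi ↦ by rw [hc i (hST hi)]
    _ = c := by rw [← Finset.sum_mul, hw, one_mul]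

theorem isPolynomialOfDegreeLE_det_id_add_smul {E : Type*} [NormedAddCommGroup E]
    [NormedSpace ℝ E] [FiniteDimensional ℝ E] (A : E →L[ℝ] E) :
    IsPolynomialOfDegreeLE (Module.finrank ℝ E)
      fun t ↦ (ContinuousLinearMap.id ℝ E + t • A).det := by
  let b := Module.finBasis ℝ E
  let M := LinearMap.toMatrix b b (A : E →ₗ[ℝ] E)
  refine ⟨((X : ℝ[X]) • M.map C + (1 : Matrix _ _ ℝ).map C).det, ?_, fun t ↦ ?_⟩
  · simpa using natDegree_det_X_add_C_le M 1
  · have hmatrix : LinearMap.toMatrix b b (ContinuousLinearMap.id ℝ E + t • A : E →L[ℝ] E) =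
        t • M + 1 := by
      simp [M, add_comm]
    simp only [ContinuousLinearMap.det]
    rw [← LinearMap.det_toMatrix b, hmatrix, ← coe_evalRingHom, RingHom.map_det]
    congr 1
    ext i j
    simp [-X_mul_C, Matrix.one_apply, apply_ite]

end Polynomial

section Approximation

variable {X : Type*} [TopologicalSpace X]

theorem dense_of_separatesPoints {A : Subalgebra ℝ C(X, ℝ)} (hA : A.SeparatesPoints) :
    Dense (A : Set C(X, ℝ)) := by
  intro φ
  rw [mem_closure_iff_nhds_basis
    (nhds_basis_uniformity uniformity_basis_dist.compactConvergenceUniformity)]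
  rintro ⟨K, ε⟩ ⟨hK, hε⟩
  obtain ⟨ψ, hψ, hψφ⟩ :=
    ContinuousMap.exists_mem_subalgebra_near_continuous_of_isCompact_of_separatesPoints hA φ hK hε
  exact ⟨ψ, hψ, hψφ⟩

theorem continuous_setIntegral_continuousMap [T2Space X] [MeasurableSpace X]
    [OpensMeasurableSpace X] {μ : Measure X} [IsFiniteMeasureOnCompacts μ] {s : Set X}
    (hs : IsCompact s) :
    Continuous fun φ : C(X, ℝ) ↦ ∫ x in s, φ x ∂μ := by
  have hint (φ : C(X, ℝ)) : IntegrableOn φ s μ :=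
    φ.continuous.continuousOn.integrableOn_compact hs
  refine continuous_iff_continuousAt.2 fun φ ↦ Metric.tendsto_nhds.2 fun ε hε ↦ ?_
  have hδ : 0 < ε / (μ.real s + 1) := by positivity
  filter_upwards [Metric.tendstoUniformlyOn_iff.1
    (ContinuousMap.tendsto_iff_forall_isCompact_tendstoUniformlyOn.1 tendsto_id s hs) _ hδ]
    with ψ hψ
  calc dist (∫ x in s, ψ x ∂μ) (∫ x in s, φ x ∂μ) = ‖∫ x in s, (ψ x - φ x) ∂μ‖ := by
        rw [dist_eq_norm, integral_sub (hint ψ) (hint φ)]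
    _ ≤ ε / (μ.real s + 1) * μ.real s :=
        norm_setIntegral_le_of_norm_le_const hs.measure_lt_top fun x hx ↦ by
          rw [← dist_eq_norm, dist_comm]
          exact (hψ x hx).le
    _ < ε / (μ.real s + 1) * (μ.real s + 1) := by gcongr; exact lt_add_one _
    _ = ε := div_mul_cancel₀ _ (by positivity)

end Approximation

section PolynomialOnLines

variable (E : Type*) [AddCommGroup E] [Module ℝ E] [TopologicalSpace E]

/-- The continuous functions on `E` whose restrictions to lines are polynomials, with one degree
bound for all lines. This serves as a coordinate-free algebra of polynomial functions to which
Stone–Weierstrass applies. -/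
def polynomialOnLines : Subalgebra ℝ C(E, ℝ) where
  carrier := {φ | ∃ N, ∀ x v, IsPolynomialOfDegreeLE N fun t ↦ φ (x + t • v)}
  mul_mem' := fun ⟨_, hφ⟩ ⟨_, hψ⟩ ↦ ⟨_, fun x v ↦ (hφ x v).mul (hψ x v)⟩
  add_mem' := fun ⟨_, hφ⟩ ⟨_, hψ⟩ ↦ ⟨_, fun x v ↦ (hφ x v).add (hψ x v)⟩
  algebraMap_mem' c := ⟨0, fun _ _ ↦ .const 0 c⟩

theorem polynomialOnLines_separatesPoints [SeparatingDual ℝ E] :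
    (polynomialOnLines E).SeparatesPoints := by
  intro x y hxy
  obtain ⟨l, hl⟩ := SeparatingDual.exists_separating_of_ne (R := ℝ) hxy
  refine ⟨l, ⟨(l : C(E, ℝ)), ⟨1, fun z v ↦ ⟨C (l v) * X + C (l z), natDegree_linear_le, ?_⟩⟩, rfl⟩,
    hl⟩
  intro t
  calc (C (l v) * X + C (l z)).eval t = l v * t + l z := by simp
    _ = l (z + t • v) := by rw [map_add, map_smul, smul_eq_mul, mul_comm, add_comm]

end PolynomialOnLines

section Perturbation

variable {E : Type*} [NormedAddCommGroup E]

theorem bijective_id_add_of_lipschitzWith [CompleteSpace E] {K : ℝ≥0} {u : E → E}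
    (hu : LipschitzWith K u) (hK : K < 1) : Function.Bijective fun x ↦ x + u x := by
  have hcontr (y : E) : ContractingWith K fun x ↦ y - u x :=
    ⟨hK, by simpa using (LipschitzWith.const y).sub hu⟩
  have hfix {x y : E} : x + u x = y ↔ Function.IsFixedPt (fun x ↦ y - u x) x := by
    rw [Function.IsFixedPt, sub_eq_iff_eq_add, eq_comm]
  exact ⟨fun x x' h ↦ (hcontr _).fixedPoint_unique' (hfix.1 h) (hfix.1 rfl),
    fun y ↦ ⟨_, hfix.2 (hcontr y).fixedPoint_isFixedPt⟩⟩

variable [NormedSpace ℝ E]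

theorem continuous_det_id_add :
    Continuous fun A : E →L[ℝ] E ↦ (ContinuousLinearMap.id ℝ E + A).det :=
  ContinuousLinearMap.continuous_det.comp (continuous_const_add _)

theorem eventually_forall_det_id_add_smul_pos {S : Set (E →L[ℝ] E)} (hS : IsCompact S) :
    ∀ᶠ t : ℝ in 𝓝 0, ∀ A ∈ S, 0 < (ContinuousLinearMap.id ℝ E + t • A).det := by
  refine hS.eventually_forall_of_forall_eventually fun A _ ↦ ?_
  have hcont : Continuous fun z : ℝ × (E →L[ℝ] E) ↦
      (ContinuousLinearMap.id ℝ E + z.1 • z.2).det :=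
    continuous_det_id_add.comp continuous_smul
  exact hcont.continuousAt.eventually_const_lt (by simp [ContinuousLinearMap.det])

variable [FiniteDimensional ℝ E] [MeasurableSpace E] [BorelSpace E] (μ : Measure E)
  [μ.IsAddHaarMeasure]
  {h : E → E} {s : Set E}

theorem eventually_setIntegral_comp_id_add_smul_mul_det (hh : ContDiff ℝ 1 h)
    (hsupp : HasCompactSupport h) (hs : MeasurableSet s) (hsub : Function.support h ⊆ s) :
    ∀ᶠ t : ℝ in 𝓝 0, ∀ φ : E → ℝ,
      ∫ x in s, φ (x + t • h x) * (ContinuousLinearMap.id ℝ E + t • fderiv ℝ h x).det ∂μ =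
        ∫ x in s, φ x ∂μ := by
  obtain ⟨L, hL⟩ := hh.lipschitzWith_of_hasCompactSupport hsupp one_ne_zero
  have hlip : ∀ᶠ t : ℝ in 𝓝 0, ‖t‖₊ * L < 1 :=
    (by fun_prop : Continuous fun t : ℝ ↦ ‖t‖₊ * L).continuousAt.eventually_lt_const (by simp)
  have hdet := eventually_forall_det_id_add_smul_pos
    ((hsupp.fderiv ℝ).isCompact_range (hh.continuous_fderiv one_ne_zero))
  filter_upwards [hlip, hdet] with t hlip hdet φ
  have hbij : Function.Bijective fun x ↦ x + t • h x :=
    bijective_id_add_of_lipschitzWith ((lipschitzWith_smul t).comp hL) hlip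
  have himage : (fun x ↦ x + t • h x) '' s = s := by
    have hfix : EqOn (fun x ↦ x + t • h x) id sᶜ := fun x hx ↦ by
      simp [Function.notMem_support.1 fun hx' ↦ hx (hsub hx')]
    rw [← compl_inj_iff, ← image_compl_eq hbij, hfix.image_eq, image_id]
  have hderiv (x : E) : HasFDerivAt (fun x ↦ x + t • h x)
      (ContinuousLinearMap.id ℝ E + t • fderiv ℝ h x) x :=
    (hasFDerivAt_id x).add ((hh.differentiable one_ne_zero x).hasFDerivAt.const_smul t)
  calc ∫ x in s, φ (x + t • h x) * (ContinuousLinearMap.id ℝ E + t • fderiv ℝ h x).det ∂μ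
      = ∫ x in s, |(ContinuousLinearMap.id ℝ E + t • fderiv ℝ h x).det| • φ (x + t • h x) ∂μ := by
        simp_rw [abs_of_pos (hdet _ (mem_range_self _)), smul_eq_mul, mul_comm]
    _ = ∫ x in (fun x ↦ x + t • h x) '' s, φ x ∂μ :=
        (integral_image_eq_integral_abs_det_fderiv_smul μ hs
          (fun x _ ↦ (hderiv x).hasFDerivWithinAt) hbij.1.injOn φ).symm
    _ = ∫ x in s, φ x ∂μ := by rw [himage]

theorem setIntegral_comp_id_add_mul_det_of_mem_polynomialOnLines (hh : ContDiff ℝ 1 h)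
    (hs : IsCompact s) (hsub : Function.support h ⊆ s) {φ : C(E, ℝ)}
    (hφ : φ ∈ polynomialOnLines E) :
    ∫ x in s, φ (x + h x) * (ContinuousLinearMap.id ℝ E + fderiv ℝ h x).det ∂μ =
      ∫ x in s, φ x ∂μ := by
  obtain ⟨N, hN⟩ := hφ
  have hcont := hh.continuous
  have hfderiv : Continuous (fderiv ℝ h) := hh.continuous_fderiv one_ne_zero
  have hint (t : ℝ) : IntegrableOn (fun x ↦ φ (x + t • h x) *
      (ContinuousLinearMap.id ℝ E + t • fderiv ℝ h x).det) s μ :=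
    ((φ.continuous.comp (by fun_prop)).mul (continuous_det_id_add.comp
      (hfderiv.const_smul t))).continuousOn.integrableOn_compact hs
  have hsmall := eventually_setIntegral_comp_id_add_smul_mul_det μ hh
    (.of_support_subset_isCompact hs hsub) hs.measurableSet hsub
  simpa only [one_smul] using integral_eq_of_isPolynomialOfDegreeLE
    (fun x ↦ (hN x (h x)).mul (isPolynomialOfDegreeLE_det_id_add_smul (fderiv ℝ h x)))
    (infinite_of_mem_nhds 0 hsmall) (fun t _ ↦ hint t) (fun t ht ↦ ht φ) 1

theorem setIntegral_comp_id_add_mul_det (hh : ContDiff ℝ 1 h) (hs : IsCompact s)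
    (hsub : Function.support h ⊆ s) (φ : C(E, ℝ)) :
    ∫ x in s, φ (x + h x) * (ContinuousLinearMap.id ℝ E + fderiv ℝ h x).det ∂μ =
      ∫ x in s, φ x ∂μ := by
  let f : C(E, E) := ⟨fun x ↦ x + h x, continuous_id.add hh.continuous⟩
  let J : C(E, ℝ) := ⟨fun x ↦ (ContinuousLinearMap.id ℝ E + fderiv ℝ h x).det,
    continuous_det_id_add.comp (hh.continuous_fderiv one_ne_zero)⟩
  have hleft : Continuous fun φ : C(E, ℝ) ↦ ∫ x in s, φ (f x) * J x ∂μ :=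
    (continuous_setIntegral_continuousMap hs).comp
      ((ContinuousMap.continuous_precomp f).mul_const J)
  exact congr_fun (hleft.ext_on (dense_of_separatesPoints (polynomialOnLines_separatesPoints E))
    (continuous_setIntegral_continuousMap hs)
    fun _ hψ ↦ setIntegral_comp_id_add_mul_det_of_mem_polynomialOnLines μ hh hs hsub hψ) φ

end Perturbation

section Surjectivity

variable {E : Type*} [NormedAddCommGroup E] [NormedSpace ℝ E] [FiniteDimensional ℝ E] {f : E → E}

theorem denseRange_id_add_of_contDiff_of_hasCompactSupport (hf : ContDiff ℝ 1 f)
    (hsupp : HasCompactSupport f) : DenseRange fun x ↦ x + f x := by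
  borelize E
  let μ : Measure E := Measure.addHaar
  rw [Metric.denseRange_iff]
  by_contra! ⟨y, r, hr, hfar⟩
  let b : ContDiffBump y := ⟨r / 2, r, half_pos hr, half_lt_self hr⟩
  set s := tsupport f ∪ tsupport b
  have hs : IsCompact s := hsupp.isCompact.union b.hasCompactSupport.isCompact
  have hintegral : ∫ x, b x ∂μ = 0 :=
    calc ∫ x, b x ∂μ = ∫ x in s, b x ∂μ :=
          (setIntegral_eq_integral_of_forall_compl_eq_zero fun x hx ↦
            image_eq_zero_of_notMem_tsupport fun hx' ↦ hx (.inr hx')).symm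
      _ = ∫ x in s, b (x + f x) * (ContinuousLinearMap.id ℝ E + fderiv ℝ f x).det ∂μ :=
          (setIntegral_comp_id_add_mul_det μ hf hs
            ((subset_tsupport f).trans subset_union_left) ⟨b, b.continuous⟩).symm
      _ = 0 := by
          have hb (x : E) : b (x + f x) = 0 := b.zero_of_le_dist (by simpa [dist_comm] using hfar x)
          simp [hb]
  exact b.integral_pos.ne' hintegral

theorem surjective_id_add_of_hasCompactSupport (hf : Continuous f) (hsupp : HasCompactSupport f) :
    Function.Surjective fun x ↦ x + f x := by
  have hdense : DenseRange fun x ↦ x + f x := by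
    rw [Metric.denseRange_iff]
    intro y ε hε
    obtain ⟨g, hg, hgf, hgsupp⟩ := hf.exists_contDiff_approx 1
      (continuous_const (y := ε / 2)) fun _ ↦ half_pos hε
    obtain ⟨x, hx⟩ := Metric.denseRange_iff.1
      (denseRange_id_add_of_contDiff_of_hasCompactSupport hg (hsupp.mono hgsupp)) y _ (half_pos hε)
    refine ⟨x, ?_⟩
    calc dist y (x + f x) ≤ dist y (x + g x) + dist (x + g x) (x + f x) := dist_triangle _ _ _
      _ < ε / 2 + ε / 2 := add_lt_add hx (by simpa using hgf x)
      _ = ε := add_halves ε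
  have hproper : IsProperMap fun x ↦ x + f x := by
    refine isProperMap_iff_tendsto_cocompact.2 ⟨by fun_prop, tendsto_id.congr' ?_⟩
    rw [hasCompactSupport_iff_eventuallyEq, coclosedCompact_eq_cocompact] at hsupp
    filter_upwards [hsupp] with x hx
    simp [hx]
  rw [← range_eq_univ, ← hproper.isClosed_range.closure_eq, hdense.closure_range]

theorem surjective_id_add_boundedContinuousFunction (u : E →ᵇ E) :
    Function.Surjective fun x ↦ x + u x := by
  intro y
  let b : ContDiffBump (0 : E) := ⟨‖y‖ + ‖u‖ + 1, ‖y‖ + ‖u‖ + 2, by positivity, by linarith⟩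
  obtain ⟨x, hx⟩ := surjective_id_add_of_hasCompactSupport (b.continuous.smul u.continuous)
    b.hasCompactSupport.smul_right y
  have hnorm : ‖x‖ ≤ ‖y‖ + ‖u‖ :=
    calc ‖x‖ = ‖y - b x • u x‖ := by rw [← hx]; simp
      _ ≤ ‖y‖ + ‖b x • u x‖ := norm_sub_le _ _
      _ ≤ ‖y‖ + 1 * ‖u‖ := by
          rw [norm_smul, Real.norm_of_nonneg b.nonneg]
          gcongr
          exacts [b.le_one, u.norm_coe_le_norm x]
      _ = ‖y‖ + ‖u‖ := by rw [one_mul]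
  have hb : b x = 1 := b.one_of_mem_closedBall (mem_closedBall_zero_iff.2 (by simp [b]; linarith))
  exact ⟨x, by simpa [hb] using hx⟩

theorem stmt_5_general {A : Set E} {ν : ℝ} (hν : 0 ≤ ν) {g : E → E} (hcont : ContinuousOn g A)
    (hclose : ∀ x ∈ A, ‖g x - x‖ ≤ ν) : {y | closedBall y ν ⊆ A} ⊆ g '' A := by
  intro y hy
  let u : closedBall y ν →ᵇ E := .ofNormedAddCommGroup (fun x ↦ g x - x)
    ((hcont.mono hy).sub continuousOn_id).domRestrict ν fun x ↦ hclose x (hy x.2)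
  obtain ⟨U, hU, hUu⟩ := u.exists_norm_eq_domRestrict_eq isClosed_closedBall ℝ
  obtain ⟨x, hx⟩ := surjective_id_add_boundedContinuousFunction U y
  have hUx : ‖U x‖ ≤ ν := (U.norm_coe_le_norm x).trans
    (hU.trans_le (BoundedContinuousFunction.norm_ofNormedAddCommGroup_le _ hν _))
  have hxy : x ∈ closedBall y ν := by
    rwa [mem_closedBall_iff_norm', ← hx, add_sub_cancel_left]
  have hgx : U x = g x - x := DFunLike.congr_fun hUu ⟨x, hxy⟩
  exact ⟨x, hy hxy, by simpa [hgx] using hx⟩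

end Surjectivity

theorem stmt_5 (n : ℕ) (hn : 1 ≤ n) (s ν : ℝ) (hs : 0 < s) (hν : 0 ≤ ν) (hνs : ν < s)
    (g : EuclideanSpace ℝ (Fin n) → EuclideanSpace ℝ (Fin n))
    (hcont : ContinuousOn g (closedBall (0 : EuclideanSpace ℝ (Fin n)) s))
    (hclose : ∀ x ∈ closedBall (0 : EuclideanSpace ℝ (Fin n)) s, ‖g x - x‖ ≤ ν) :
    ball (0 : EuclideanSpace ℝ (Fin n)) (s - ν) ⊆
      g '' closedBall (0 : EuclideanSpace ℝ (Fin n)) s := by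
  intro y hy
  exact stmt_5_general hν hcont hclose
    (closedBall_subset_closedBall' (by linarith [mem_ball.1 hy]))
end

section
/- Let k ≥ 1 and identify ℂ^k with its underlying Euclidean space. Let A and B be continuous linear automorphisms of ℂ^k, let s > 0, s' ≥ 0 and ν ≥ 0 satisfy s' + ‖(B∘A)⁻¹‖·ν < s, and let g : ℂ^k → ℂ^k be continuous on the compact set A[B̄(0,s)] with ‖g(y) − B(y)‖ ≤ ν for every y ∈ A[B̄(0,s)]. Then (B∘A)[B(0,s')] ⊆ g(A[B(0,s)]). -/
open Metric

/-!
Writing `L = (B ∘ A)⁻¹`, a solution of `g (A x) = B (A x₀)` is a fixed point of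
`x ↦ x₀ - L (g (A x) - B (A x))`, which maps `closedBall 0 s` into itself, so everything rests on
Brouwer's fixed point theorem.

Brouwer's theorem is proved by integrating Jacobians. If `h` is Lipschitz and vanishes outside `U`,
then for large `t` the map `t • id + h` is injective and sends `U` onto `t • U`, so that
`∫ x in U, det (t + Dh x) = t ^ n * vol U`. Both sides are polynomials in `t`, hence they agree at
`t = 1`. For a `C¹` retraction `r = id + h` of a ball onto its boundary sphere, the range of `Dr x`
is orthogonal to `r x`, so the left side is zero and `r` cannot exist. Consequently a `C¹` map which
is the identity on the sphere has a zero in the ball, as otherwise normalizing it would be such an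
`r`.
-/

open Set Function MeasureTheory Module
open scoped NNReal Topology RealInnerProductSpace Polynomial

section ExtensionByZero

theorem inter_frontier_nonempty_of_isPreconnected {X : Type*} [TopologicalSpace X] {s t : Set X}
    (ht : IsPreconnected t) (hs : (t ∩ s).Nonempty) (hsc : (t ∩ sᶜ).Nonempty) :
    (t ∩ frontier s).Nonempty := by
  by_contra hempty
  have hfr : ∀ x ∈ t, x ∉ frontier s := fun x hxt hxs => hempty ⟨x, hxt, hxs⟩
  have hin : ∀ x ∈ t, x ∈ s → x ∈ interior s := fun x hxt hxs => by
    by_contra hxi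
    exact hfr x hxt ⟨subset_closure hxs, hxi⟩
  have hout : ∀ x ∈ t, x ∉ s → x ∈ (closure s)ᶜ := fun x hxt hxs hxc =>
    hfr x hxt ⟨hxc, fun hxi => hxs (interior_subset hxi)⟩
  obtain ⟨a, hat, has⟩ := hs
  obtain ⟨b, hbt, hbs⟩ := hsc
  obtain ⟨z, -, hzi, hzc⟩ := ht _ _ isOpen_interior isClosed_closure.isOpen_compl
    (fun x hxt => (em (x ∈ s)).imp (hin x hxt) (hout x hxt))
    ⟨a, hat, hin a hat has⟩ ⟨b, hbt, hout b hbt hbs⟩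
  exact hzc (subset_closure (interior_subset hzi))

theorem lipschitzWith_indicator_of_eq_zero_on_frontier {E F : Type*} [NormedAddCommGroup E]
    [NormedSpace ℝ E] [NormedAddCommGroup F] {K : ℝ≥0} {f : E → F} {s : Set E}
    (hf : LipschitzOnWith K f s) (hs : IsClosed s) (h0 : ∀ x ∈ frontier s, f x = 0) :
    LipschitzWith K (s.indicator f) := by
  have norm_le : ∀ x ∈ s, ∀ y ∉ s, ‖f x‖ ≤ K * dist x y := by
    intro x hx y hy
    obtain ⟨z, hz, hzs⟩ := inter_frontier_nonempty_of_isPreconnected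
      (convex_segment x y).isPreconnected ⟨x, left_mem_segment ℝ x y, hx⟩
      ⟨y, right_mem_segment ℝ x y, hy⟩
    calc ‖f x‖ = dist (f x) (f z) := by rw [h0 z hzs, dist_zero_right]
      _ ≤ K * dist x z := hf.dist_le_mul x hx z (hs.frontier_subset hzs)
      _ ≤ K * dist x y := by
        gcongr
        linarith [dist_add_dist_of_mem_segment hz, dist_nonneg (x := z) (y := y)]
  refine LipschitzWith.of_dist_le_mul fun x y => ?_
  by_cases hx : x ∈ s <;> by_cases hy : y ∈ s
  · simpa [hx, hy] using hf.dist_le_mul x hx y hy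
  · simpa [hx, hy] using norm_le x hx y hy
  · simpa [hx, hy, dist_comm] using norm_le y hy x hx
  · simpa [hx, hy] using by positivity

end ExtensionByZero

theorem bijective_id_add_of_lipschitzWith_s6 {E : Type*} [NormedAddCommGroup E] [CompleteSpace E]
    {K : ℝ≥0} {h : E → E} (hh : LipschitzWith K h) (hK : K < 1) : Bijective fun x => x + h x := by
  refine (bijective_iff_existsUnique _).2 fun y => ?_
  have hcontr : ContractingWith K fun x => y - h x :=
    ⟨hK, LipschitzWith.of_dist_le_mul fun a b => by
      simpa only [dist_sub_left] using hh.dist_le_mul a b⟩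
  exact ⟨hcontr.fixedPoint, (sub_eq_iff_eq_add.1 hcontr.fixedPoint_isFixedPt).symm,
    fun x hx => hcontr.fixedPoint_unique (sub_eq_iff_eq_add.2 hx.symm)⟩

theorem integral_eval_eq_of_forall_mem_finset {α : Type*} [MeasurableSpace α] {μ : Measure α}
    {p : α → ℝ[X]} {q : ℝ[X]} {T : Finset ℝ} (hp : ∀ a, (p a).degree < T.card)
    (hq : q.degree < T.card) (hint : ∀ t ∈ T, Integrable (fun a => (p a).eval t) μ)
    (hT : ∀ t ∈ T, ∫ a, (p a).eval t ∂μ = q.eval t) (u : ℝ) :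
    ∫ a, (p a).eval u ∂μ = q.eval u := by
  have interpolate_eval : ∀ r : ℝ[X], r.degree < T.card →
      r.eval u = ∑ t ∈ T, r.eval t * (Lagrange.basis T id t).eval u := by
    intro r hr
    conv_lhs => rw [Lagrange.eq_interpolate (injOn_id (T : Set ℝ)) hr, Lagrange.interpolate_apply]
    simp only [Polynomial.eval_finsetSum, Polynomial.eval_mul, Polynomial.eval_C, id]
  simp_rw [interpolate_eval q hq, fun a => interpolate_eval (p a) (hp a)]
  rw [integral_finsetSum _ fun t ht => (hint t ht).mul_const _]
  exact Finset.sum_congr rfl fun t ht => by rw [integral_mul_const, hT t ht]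

section Determinant

variable {E : Type*} [NormedAddCommGroup E] [NormedSpace ℝ E] [FiniteDimensional ℝ E]

theorem eval_charpoly_neg_eq_det (A : E →L[ℝ] E) (t : ℝ) :
    (-(A : E →ₗ[ℝ] E)).charpoly.eval t = (t • (1 : E →L[ℝ] E) + A).det := by
  rw [LinearMap.eval_charpoly, sub_neg_eq_add, Algebra.algebraMap_eq_smul_one]
  rfl

theorem det_one_add_pos_of_norm_lt_one {A : E →L[ℝ] E} (hA : ‖A‖ < 1) : 0 < (1 + A).det := by
  have det_ne_zero : ∀ t ∈ Icc (0 : ℝ) 1, (1 + t • A).det ≠ 0 := by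
    intro t ht
    have hnorm : ‖-(t • A)‖ < 1 := by
      rw [norm_neg, norm_smul, Real.norm_of_nonneg ht.1]
      exact (mul_le_of_le_one_left (norm_nonneg A) ht.2).trans_lt hA
    have hunit := isUnit_one_sub_of_norm_lt_one hnorm
    rw [sub_neg_eq_add] at hunit
    exact ((hunit.map ContinuousLinearMap.toLinearMapRingHom).map LinearMap.det).ne_zero
  have hcont : Continuous fun t : ℝ => (1 + t • A).det :=
    ContinuousLinearMap.continuous_det.comp (by fun_prop)
  by_contra! hneg
  have h0 : (0 : ℝ) ∈ Icc (1 + (1 : ℝ) • A).det (1 + (0 : ℝ) • A).det := by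
    rw [one_smul, zero_smul, add_zero]
    exact ⟨hneg, zero_le_one.trans_eq (LinearMap.det_id (M := E)).symm⟩
  obtain ⟨t, ht, hdet⟩ := intermediate_value_Icc' zero_le_one hcont.continuousOn h0
  exact det_ne_zero t ht hdet

end Determinant

section Jacobian

variable {E : Type*} [NormedAddCommGroup E] [NormedSpace ℝ E] [FiniteDimensional ℝ E]
  [MeasurableSpace E] [BorelSpace E] {h : E → E} {K : ℝ≥0} {U : Set E}

theorem integrableOn_det_smul_one_add_fderiv {μ : Measure E} (hh : LipschitzWith K h)
    (hU : μ U ≠ ⊤) (t : ℝ) :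
    IntegrableOn (fun x => (t • (1 : E →L[ℝ] E) + fderiv ℝ h x).det) U μ := by
  have hcont : Continuous fun A : E →L[ℝ] E => (t • (1 : E →L[ℝ] E) + A).det :=
    ContinuousLinearMap.continuous_det.comp (by fun_prop)
  obtain ⟨C, hC⟩ := (isCompact_closedBall (0 : E →L[ℝ] E) K).exists_bound_of_continuousOn
    hcont.continuousOn
  refine Measure.integrableOn_of_bounded (M := C) hU
    (hcont.measurable.comp (measurable_fderiv ℝ h)).aestronglyMeasurable (.of_forall fun x => ?_)
  exact hC _ (mem_closedBall_zero_iff.2 (norm_fderiv_le_of_lipschitz ℝ hh))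

variable (μ : Measure E) [μ.IsAddHaarMeasure]

theorem setIntegral_det_one_add_fderiv_of_lt_one (hh : LipschitzWith K h) (hK : K < 1)
    (hU : MeasurableSet U) (hd : ∀ x ∈ U, DifferentiableAt ℝ h x) (h0 : ∀ x ∉ U, h x = 0) :
    ∫ x in U, (1 + fderiv ℝ h x).det ∂μ = μ.real U := by
  have hbij : Bijective fun x => x + h x := bijective_id_add_of_lipschitzWith_s6 hh hK
  have image_eq : (fun x => x + h x) '' U = U := by
    have himg : (fun x => x + h x) '' Uᶜ = Uᶜ :=
      (image_congr fun x hx => by rw [h0 x hx, add_zero]).trans (image_id' _)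
    rwa [image_compl_eq hbij, compl_inj_iff] at himg
  have hderiv : ∀ x ∈ U, HasFDerivWithinAt (fun x => x + h x) (1 + fderiv ℝ h x) U x :=
    fun x hx => ((hasFDerivAt_id x).add (hd x hx).hasFDerivAt).hasFDerivWithinAt
  have hpos : ∀ x, 0 < (1 + fderiv ℝ h x).det := fun x =>
    det_one_add_pos_of_norm_lt_one
      ((norm_fderiv_le_of_lipschitz ℝ hh).trans_lt (by exact_mod_cast hK))
  have hchange := integral_image_eq_integral_abs_det_fderiv_smul μ hU hderiv
    hbij.injective.injOn fun _ => (1 : ℝ)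
  simpa only [image_eq, abs_of_pos (hpos _), smul_eq_mul, mul_one, setIntegral_const, eq_comm]
    using hchange

theorem setIntegral_det_smul_one_add_fderiv_of_lt (hh : LipschitzWith K h) {t : ℝ≥0} (hKt : K < t)
    (hU : MeasurableSet U) (hd : ∀ x ∈ U, DifferentiableAt ℝ h x) (h0 : ∀ x ∉ U, h x = 0) :
    ∫ x in U, ((t : ℝ) • (1 : E →L[ℝ] E) + fderiv ℝ h x).det ∂μ =
      t ^ finrank ℝ E * μ.real U := by
  have ht : 0 < t := zero_le.trans_lt hKt
  have hscaled : LipschitzWith (t⁻¹ * K) ((t⁻¹ : ℝ) • h) := by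
    have hcomp := (lipschitzWith_smul (β := E) (t⁻¹ : ℝ)).comp hh
    rwa [nnnorm_inv, NNReal.nnnorm_eq] at hcomp
  have hdet : ∀ x, ((t : ℝ) • (1 : E →L[ℝ] E) + fderiv ℝ h x).det =
      t ^ finrank ℝ E * (1 + fderiv ℝ ((t⁻¹ : ℝ) • h) x).det := fun x => by
    rw [← LinearMap.det_smul, ← ContinuousLinearMap.toLinearMap_smul, smul_add,
      fderiv_const_smul_field, Pi.smul_apply, smul_inv_smul₀ (by exact_mod_cast ht.ne')]
  simp_rw [hdet, integral_const_mul]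
  rw [setIntegral_det_one_add_fderiv_of_lt_one μ hscaled ((inv_mul_lt_one₀ ht).2 hKt) hU
    (fun x hx => (hd x hx).const_smul _) fun x hx => by
      rw [Pi.smul_apply, h0 x hx, smul_zero]]

theorem setIntegral_det_one_add_fderiv (hh : LipschitzWith K h) (hU : MeasurableSet U)
    (hμU : μ U ≠ ⊤) (hd : ∀ x ∈ U, DifferentiableAt ℝ h x) (h0 : ∀ x ∉ U, h x = 0) :
    ∫ x in U, (1 + fderiv ℝ h x).det ∂μ = μ.real U := by
  set n := finrank ℝ E
  obtain ⟨T, hTK, hTcard⟩ := (Ioi_infinite (K : ℝ)).exists_subset_card_eq (n + 1)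
  have eval_of_large : ∀ t ∈ T, ∫ x in U, (t • (1 : E →L[ℝ] E) + fderiv ℝ h x).det ∂μ =
      (Polynomial.C (μ.real U) * Polynomial.X ^ n).eval t := by
    intro t ht
    have hKt : (K : ℝ) < t := hTK ht
    lift t to ℝ≥0 using K.2.trans hKt.le
    rw [setIntegral_det_smul_one_add_fderiv_of_lt μ hh (by exact_mod_cast hKt) hU hd h0,
      Polynomial.eval_C_mul, Polynomial.eval_X_pow, mul_comm]
  have hnT : (n : WithBot ℕ) < T.card := by
    rw [hTcard]
    exact_mod_cast n.lt_succ_self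
  have hdegree : ∀ A : E →ₗ[ℝ] E, A.charpoly.degree < T.card := fun A => by
    rw [Polynomial.degree_eq_natDegree A.charpoly_monic.ne_zero, A.charpoly_natDegree]
    exact hnT
  have hone := integral_eval_eq_of_forall_mem_finset
    (p := fun x => (-(fderiv ℝ h x : E →ₗ[ℝ] E)).charpoly) (fun x => hdegree _)
    ((Polynomial.degree_C_mul_X_pow_le n _).trans_lt hnT)
    (fun t _ => by
      simp_rw [eval_charpoly_neg_eq_det]
      exact integrableOn_det_smul_one_add_fderiv hh hμU t)
    (by simpa only [eval_charpoly_neg_eq_det] using eval_of_large) 1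
  simpa [eval_charpoly_neg_eq_det] using hone

end Jacobian

section Retraction

variable {E : Type*} [NormedAddCommGroup E] [InnerProductSpace ℝ E] [FiniteDimensional ℝ E]

theorem det_fderiv_eq_zero_of_norm_eventuallyEq_const {f : E → E} {x : E} {c : ℝ} (hc : c ≠ 0)
    (hf : DifferentiableAt ℝ f x) (hfc : ∀ᶠ y in 𝓝 x, ‖f y‖ = c) : (fderiv ℝ f x).det = 0 := by
  have inner_eq_zero : ∀ w, ⟪f x, fderiv ℝ f x w⟫ = 0 := by
    have hconst : HasFDerivAt (fun y => ‖f y‖ ^ 2) (0 : E →L[ℝ] ℝ) x :=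
      (hasFDerivAt_const (c ^ 2) x).congr_of_eventuallyEq
        (hfc.mono fun y hy => congrArg (· ^ 2) hy)
    intro w
    simpa using congrArg (fun L : E →L[ℝ] ℝ => L w) (hf.hasFDerivAt.norm_sq.unique hconst)
  by_contra hdet
  obtain ⟨w, hw⟩ := (LinearMap.equivOfDetNeZero _ hdet).surjective (f x)
  have hfx : f x = 0 := by
    rw [← inner_self_eq_zero (𝕜 := ℝ)]
    nth_rw 2 [← hw]
    exact inner_eq_zero w
  exact hc (by rw [← hfc.self_of_nhds, hfx, norm_zero])

theorem not_exists_contDiffOn_retraction_sphere {R : ℝ} (hR : 0 < R) :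
    ¬∃ r : E → E, ContDiffOn ℝ 1 r (closedBall 0 R) ∧ MapsTo r (closedBall 0 R) (sphere 0 R) ∧
      ∀ x ∈ sphere 0 R, r x = x := by
  rintro ⟨r, hr, hmaps, hid⟩
  let _ : MeasurableSpace E := borel E
  have : BorelSpace E := ⟨rfl⟩
  set h := (closedBall (0 : E) R).indicator fun x => r x - x
  obtain ⟨K, hK⟩ := (hr.sub contDiffOn_id).exists_lipschitzOnWith one_ne_zero
    (convex_closedBall 0 R) (isCompact_closedBall 0 R)
  have hh : LipschitzWith K h :=
    lipschitzWith_indicator_of_eq_zero_on_frontier hK isClosed_closedBall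
      (by simpa [frontier_closedBall _ hR.ne', sub_eq_zero] using hid)
  have hnhds : ∀ x ∈ ball (0 : E) R, closedBall 0 R ∈ 𝓝 x := fun x hx =>
    Filter.mem_of_superset (isOpen_ball.mem_nhds hx) ball_subset_closedBall
  have hrd : ∀ x ∈ ball 0 R, DifferentiableAt ℝ r x := fun x hx =>
    (hr.contDiffAt (hnhds x hx)).differentiableAt one_ne_zero
  have hderiv : ∀ x ∈ ball 0 R, HasFDerivAt h (fderiv ℝ r x - 1) x := fun x hx =>
    ((hrd x hx).hasFDerivAt.sub (hasFDerivAt_id x)).congr_of_eventuallyEq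
      (Filter.eventuallyEq_of_mem (hnhds x hx) eqOn_indicator)
  have hzero : ∀ x ∉ ball 0 R, h x = 0 := fun x hx => by
    refine indicator_apply_eq_zero.2 fun hxR => sub_eq_zero.2 (hid x ?_)
    exact le_antisymm hxR (not_lt.1 hx)
  have hvol := setIntegral_det_one_add_fderiv (volume : Measure E) hh measurableSet_ball
    measure_ball_lt_top.ne (fun x hx => (hderiv x hx).differentiableAt) hzero
  refine (ENNReal.toReal_pos (measure_ball_pos volume (0 : E) hR).ne' measure_ball_lt_top.ne).ne'
    (hvol.symm.trans (setIntegral_eq_zero_of_forall_eq_zero fun x hx => ?_))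
  rw [(hderiv x hx).fderiv, add_sub_cancel]
  exact det_fderiv_eq_zero_of_norm_eventuallyEq_const hR.ne' (hrd x hx)
    (Filter.mem_of_superset (hnhds x hx) fun y hy => mem_sphere_zero_iff_norm.1 (hmaps hy))

theorem exists_eq_zero_of_eq_id_on_sphere {R : ℝ} (hR : 0 < R) {f : E → E}
    (hf : ContDiffOn ℝ 1 f (closedBall 0 R)) (hid : ∀ x ∈ sphere 0 R, f x = x) :
    ∃ x ∈ closedBall 0 R, f x = 0 := by
  by_contra! hne
  have hne' : ∀ x ∈ closedBall 0 R, ‖f x‖ ≠ 0 := fun x hx => norm_ne_zero_iff.2 (hne x hx)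
  refine not_exists_contDiffOn_retraction_sphere hR ⟨fun x => (R / ‖f x‖) • f x, ?_, ?_, ?_⟩
  · exact (contDiffOn_const.div (hf.norm ℝ hne) hne').smul hf
  · intro x hx
    rw [mem_sphere_zero_iff_norm, norm_smul, norm_div, norm_norm, Real.norm_of_nonneg hR.le,
      div_mul_cancel₀ _ (hne' x hx)]
  · intro x hx
    simp only [hid x hx, mem_sphere_zero_iff_norm.1 hx, div_self hR.ne', one_smul]

theorem exists_add_eq_zero_of_contDiff {h : E → E} (hh : ContDiff ℝ 1 h)
    (hsupp : HasCompactSupport h) : ∃ x, x + h x = 0 := by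
  obtain ⟨R, hR, hsR⟩ := hsupp.isBounded.subset_ball_lt 0 0
  obtain ⟨x, -, hx⟩ := exists_eq_zero_of_eq_id_on_sphere hR (contDiff_id.add hh).contDiffOn
    fun x hx => by
      have hxs : x ∉ tsupport h := fun hxs => (mem_ball.1 (hsR hxs)).ne hx
      simp [image_eq_zero_of_notMem_tsupport hxs]
  exact ⟨x, hx⟩

end Retraction

section Brouwer

variable {E : Type*} [NormedAddCommGroup E] [NormedSpace ℝ E] [FiniteDimensional ℝ E]

theorem exists_add_eq_zero_of_hasCompactSupport {h : E → E} (hh : Continuous h)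
    (hsupp : HasCompactSupport h) : ∃ x, x + h x = 0 := by
  by_contra! hne
  obtain ⟨g, hg, hgh, hgsupp⟩ := hh.exists_contDiff_approx 1 (continuous_id.add hh).norm
    fun x => norm_pos_iff.2 (hne x)
  let e := toEuclidean (E := E)
  have hgs : HasCompactSupport g := hsupp.mono hgsupp
  obtain ⟨y, hy⟩ := exists_add_eq_zero_of_contDiff (h := e ∘ g ∘ e.symm)
    (e.contDiff.comp (hg.comp e.symm.contDiff))
    ((hgs.comp_homeomorph e.symm.toHomeomorph).comp_left e.map_zero)
  have hzero : e.symm y + g (e.symm y) = 0 := e.injective (by simpa using hy)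
  have hlt := hgh (e.symm y)
  rw [dist_comm, dist_eq_norm, eq_neg_of_add_eq_zero_right hzero, sub_neg_eq_add, add_comm] at hlt
  exact hlt.false

theorem exists_isFixedPt_of_isBounded_range {f : E → E} (hf : Continuous f)
    (hbdd : Bornology.IsBounded (range f)) : ∃ x, IsFixedPt f x := by
  obtain ⟨M, hM⟩ := hbdd.subset_closedBall 0
  obtain ⟨χ, hχ1, -, hχsupp, hχ⟩ := exists_continuous_one_zero_of_isCompact
    (isCompact_closedBall (0 : E) M) isClosed_empty (disjoint_empty _)
  obtain ⟨x, hx⟩ := exists_add_eq_zero_of_hasCompactSupport (h := fun x => -(χ x • f x))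
    (χ.continuous.smul hf).neg (hχsupp.smul_right.neg)
  have hfix : χ x • f x = x := (add_neg_eq_zero.1 hx).symm
  have hxM : x ∈ closedBall 0 M := by
    rw [mem_closedBall_zero_iff, ← hfix, norm_smul, Real.norm_of_nonneg (hχ x).1]
    exact (mul_le_of_le_one_left (norm_nonneg _) (hχ x).2).trans
      (mem_closedBall_zero_iff.1 (hM (mem_range_self x)))
  refine ⟨x, ?_⟩
  rwa [hχ1 hxM, Pi.one_apply, one_smul] at hfix

/-- **Brouwer's fixed point theorem**. -/
theorem exists_isFixedPt_of_mapsTo_closedBall {c : E} {R : ℝ} (hR : 0 ≤ R) {f : E → E}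
    (hf : ContinuousOn f (closedBall c R)) (hmaps : MapsTo f (closedBall c R) (closedBall c R)) :
    ∃ x ∈ closedBall c R, IsFixedPt f x := by
  rcases hR.eq_or_lt with rfl | hR
  · rw [closedBall_zero] at hmaps ⊢
    exact ⟨c, mem_singleton c, hmaps (mem_singleton c)⟩
  have := Metric.instTietzeExtensionClosedBall ℝ c hR
  obtain ⟨F, hFmem, hF⟩ := ContinuousMap.exists_forall_mem_restrict_eq isClosed_closedBall
    ⟨(closedBall c R).domRestrict f, hf.domRestrict⟩ (t := closedBall c R) fun x => hmaps x.2
  obtain ⟨x, hx⟩ := exists_isFixedPt_of_isBounded_range F.continuous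
    (isBounded_closedBall.subset (range_subset_iff.2 hFmem))
  have hxR : x ∈ closedBall c R := hx ▸ hFmem x
  exact ⟨x, hxR, (DFunLike.congr_fun hF (⟨x, hxR⟩ : closedBall c R)).symm.trans hx⟩

theorem ball_subset_image_ball_of_norm_sub_le {s δ : ℝ} (hs : 0 ≤ s) {f : E → E}
    (hf : ContinuousOn f (closedBall 0 s)) (hδ : ∀ x ∈ closedBall 0 s, ‖f x - x‖ ≤ δ) :
    ball 0 (s - δ) ⊆ f '' ball 0 s := by
  intro y hy
  have hmaps : ∀ x ∈ closedBall 0 s, y - (f x - x) ∈ ball 0 s := fun x hx => by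
    rw [mem_ball_zero_iff] at hy ⊢
    linarith [norm_sub_le y (f x - x), hδ x hx]
  obtain ⟨x, hx, hfix⟩ := exists_isFixedPt_of_mapsTo_closedBall hs
    (continuousOn_const.sub (hf.sub continuousOn_id))
    fun x hx => ball_subset_closedBall (hmaps x hx)
  refine ⟨x, hfix ▸ hmaps x hx, ?_⟩
  have hxy : y - (f x - x) = x := hfix
  rwa [sub_sub_eq_add_sub, sub_eq_iff_eq_add, add_comm, add_right_inj, eq_comm] at hxy

end Brouwer

theorem stmt_6_general {𝕜 E F G : Type*} [RCLike 𝕜] [NormedAddCommGroup E] [NormedSpace 𝕜 E]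
    [FiniteDimensional 𝕜 E] [NormedAddCommGroup F] [NormedSpace 𝕜 F] [NormedAddCommGroup G]
    [NormedSpace 𝕜 G] (A : E ≃L[𝕜] F) (B : F ≃L[𝕜] G) {s s' ν : ℝ} (hs : 0 ≤ s)
    (h : s' + ‖((A.trans B).symm : G →L[𝕜] E)‖ * ν ≤ s) {g : F → G}
    (hcont : ContinuousOn g (A '' closedBall 0 s))
    (hclose : ∀ y ∈ A '' closedBall 0 s, ‖g y - B y‖ ≤ ν) :
    (fun x => B (A x)) '' ball 0 s' ⊆ g '' (A '' ball 0 s) := by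
  let _ : NormedSpace ℝ E := NormedSpace.restrictScalars ℝ 𝕜 E
  have : IsScalarTower ℝ 𝕜 E := Real.isScalarTower
  have : FiniteDimensional ℝ E := FiniteDimensional.trans ℝ 𝕜 E
  let L : G →L[𝕜] E := (A.trans B).symm
  have hLBA : ∀ x, L (B (A x)) = x := (A.trans B).symm_apply_apply
  have hnear : ∀ x ∈ closedBall 0 s, ‖L (g (A x)) - x‖ ≤ ‖L‖ * ν := fun x hx => by
    nth_rw 2 [← hLBA x]
    rw [← map_sub]
    exact L.le_opNorm_of_le (hclose _ (mem_image_of_mem A hx))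
  have hLg : ContinuousOn (fun x => L (g (A x))) (closedBall 0 s) :=
    L.continuous.comp_continuousOn (hcont.comp A.continuous.continuousOn (mapsTo_image A _))
  rintro _ ⟨x₀, hx₀, rfl⟩
  obtain ⟨x, hx, hxx₀⟩ := ball_subset_image_ball_of_norm_sub_le hs hLg hnear
    (ball_subset_ball (le_sub_iff_add_le.2 h) hx₀)
  exact ⟨A x, mem_image_of_mem A hx, (A.trans B).symm_apply_eq.1 hxx₀⟩

theorem stmt_6 (k : ℕ) (hk : 1 ≤ k)
    (A B : EuclideanSpace ℂ (Fin k) ≃L[ℂ] EuclideanSpace ℂ (Fin k))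
    (s s' ν : ℝ) (hs : 0 < s) (hs' : 0 ≤ s') (hν : 0 ≤ ν)
    (h : s' + ‖((A.trans B).symm :
        EuclideanSpace ℂ (Fin k) →L[ℂ] EuclideanSpace ℂ (Fin k))‖ * ν < s)
    (g : EuclideanSpace ℂ (Fin k) → EuclideanSpace ℂ (Fin k))
    (hcont : ContinuousOn g (A '' closedBall (0 : EuclideanSpace ℂ (Fin k)) s))
    (hclose : ∀ y ∈ A '' closedBall (0 : EuclideanSpace ℂ (Fin k)) s, ‖g y - B y‖ ≤ ν) :
    (fun x => B (A x)) '' ball (0 : EuclideanSpace ℂ (Fin k)) s' ⊆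
      g '' (A '' ball (0 : EuclideanSpace ℂ (Fin k)) s) :=
  stmt_6_general A B hs.le h.le hcont hclose
end
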